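/- Let N ≥ 1 and let μ be the product of N copies of the standard Gaussian measure on ℝ (the law of N i.i.d. N(0,1) random variables u_1,…,u_N). Then for every t ≥ 0, μ({u ∈ ℝ^N : ∑_{i=1}^N (max(u_i,0))² ≤ t}) = 2^{−N} · (1 + ∑_{n=1}^N binom(N,n) · F_n(t)), where F_n is the CDF of the chi-square distribution with n degrees of freedom. -/

import Mathlib

open MeasureTheory ProbabilityTheory

/-!
The positive part kills half of the mass of a centred Gaussian and folds the other half onto a
gamma law: if `u` is standard normal, then `(max u 0) ^ 2` has law `½ δ₀ + ½ χ²₁`. Sums of `N`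
independent copies of this mixture are governed by the binomial theorem for characteristic
functions: choosing which `n` of the `N` summands are positive leaves a sum of `n` independent
`χ²₁` variables, which is `χ²ₙ` by the additivity of gamma laws with a common rate.
-/

section CharFun

open BoundedContinuousFunction Complex Finset
open scoped NNReal

variable {E : Type*} [NormedAddCommGroup E] [InnerProductSpace ℝ E] [MeasurableSpace E]

lemma charFun_add_measure [OpensMeasurableSpace E] (μ ν : Measure E) [IsFiniteMeasure μ]
    [IsFiniteMeasure ν] (t : E) : charFun (μ + ν) t = charFun μ t + charFun ν t := by
  simp only [charFun_eq_integral_innerProbChar]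
  exact integral_add_measure ((innerProbChar t).integrable μ) ((innerProbChar t).integrable ν)

lemma charFun_sum_measure [OpensMeasurableSpace E] {ι : Type*} (s : Finset ι) (μ : ι → Measure E)
    [∀ i, IsFiniteMeasure (μ i)] (t : E) :
    charFun (∑ i ∈ s, μ i) t = ∑ i ∈ s, charFun (μ i) t := by
  simp only [charFun_eq_integral_innerProbChar]
  exact integral_finsetSum_measure fun i _ ↦ (innerProbChar t).integrable (μ i)

lemma charFun_nnreal_smul_measure (c : ℝ≥0) (μ : Measure E) (t : E) :
    charFun (c • μ) t = c * charFun μ t := by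
  simp only [charFun_apply, integral_smul_nnreal_measure, NNReal.smul_def, real_smul]

theorem map_sum_pi_dirac_zero_mixture [CompleteSpace E] [BorelSpace E]
    [SecondCountableTopology E] (ν : Measure E) [IsProbabilityMeasure ν] {p q : ℝ≥0}
    (hpq : p + q = 1) (N : ℕ) :
    (Measure.pi fun _ : Fin N ↦ p • Measure.dirac (0 : E) + q • ν).map (fun x ↦ ∑ i, x i) =
      ∑ n ∈ range (N + 1), (q ^ n * p ^ (N - n) * N.choose n) •
        (Measure.pi fun _ : Fin n ↦ ν).map (fun x ↦ ∑ i, x i) := by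
  have : IsProbabilityMeasure (p • Measure.dirac (0 : E) + q • ν) :=
    ⟨by simpa only [Measure.add_apply, Measure.smul_apply, measure_univ, ENNReal.smul_def,
      smul_eq_mul, mul_one] using mod_cast hpq⟩
  refine Measure.ext_of_charFun (funext fun t ↦ ?_)
  calc charFun ((Measure.pi fun _ : Fin N ↦ p • Measure.dirac (0 : E) + q • ν).map
          fun x ↦ ∑ i, x i) t
      = (q * charFun ν t + p) ^ N := by
        simp [charFun_map_sum_pi_eq_prod, charFun_add_measure, charFun_nnreal_smul_measure,
          add_comm (p : ℂ)]
    _ = ∑ n ∈ range (N + 1), (q ^ n * p ^ (N - n) * N.choose n : ℂ) * charFun ν t ^ n := by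
        rw [add_pow]
        exact sum_congr rfl fun n _ ↦ by ring
    _ = charFun (∑ n ∈ range (N + 1), (q ^ n * p ^ (N - n) * N.choose n) •
          (Measure.pi fun _ : Fin n ↦ ν).map fun x ↦ ∑ i, x i) t := by
        simp [charFun_sum_measure, charFun_nnreal_smul_measure, charFun_map_sum_pi_eq_prod]

end CharFun

section Gamma

open Complex Finset
open scoped Topology

variable {a r : ℝ}

lemma measurable_gammaPDF (a r : ℝ) : Measurable (gammaPDF a r) :=
  (measurable_gammaPDFReal a r).ennreal_ofReal

lemma restrict_Ioi_gammaMeasure (a r : ℝ) :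
    (gammaMeasure a r).restrict (Set.Ioi 0) = gammaMeasure a r := by
  refine Measure.restrict_eq_self_of_ae_mem ?_
  rw [gammaMeasure, ae_withDensity_iff (measurable_gammaPDF a r)]
  filter_upwards [Measure.ae_ne volume (0 : ℝ)] with x hx hpdf
  exact lt_of_le_of_ne (not_lt.1 fun h ↦ hpdf (gammaPDF_of_neg h)) hx.symm

lemma mgf_gammaMeasure (ha : 0 < a) (hr : 0 < r) {s : ℝ} (hs : s < r) :
    mgf id (gammaMeasure a r) s = (1 - s / r) ^ (-a) := by
  have hrs : 0 < r - s := sub_pos.2 hs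
  have hΓ := (Real.Gamma_pos_of_pos ha).ne'
  calc mgf id (gammaMeasure a r) s
      = ∫ x in Set.Ioi 0, (gammaPDF a r x).toReal • Real.exp (s * x) := by
        rw [mgf, ← restrict_Ioi_gammaMeasure, gammaMeasure,
          restrict_withDensity measurableSet_Ioi, integral_withDensity_eq_integral_toReal_smul
            (measurable_gammaPDF a r) (ae_of_all _ fun _ ↦ ENNReal.ofReal_lt_top)]
        rfl
    _ = ∫ x in Set.Ioi 0, r ^ a / Real.Gamma a * (x ^ (a - 1) * Real.exp (-((r - s) * x))) := by
        refine setIntegral_congr_fun measurableSet_Ioi fun x hx ↦ ?_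
        have hx : 0 < x := hx
        have hexp : Real.exp (-((r - s) * x)) = Real.exp (-(r * x)) * Real.exp (s * x) := by
          rw [← Real.exp_add]; ring_nf
        rw [gammaPDF, ENNReal.toReal_ofReal (gammaPDFReal_nonneg ha hr x), gammaPDFReal,
          if_pos hx.le, smul_eq_mul, hexp]
        ring
    _ = r ^ a * (1 / (r - s)) ^ a := by
        rw [integral_const_mul, Real.integral_rpow_mul_exp_neg_mul_Ioi ha hrs]
        field_simp
    _ = (1 - s / r) ^ (-a) := by
        rw [← Real.mul_rpow hr.le (by positivity), Real.rpow_neg_eq_inv_rpow]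
        congr 1
        field_simp

lemma Iio_subset_integrableExpSet_gammaMeasure (ha : 0 < a) (hr : 0 < r) :
    Set.Iio r ⊆ integrableExpSet id (gammaMeasure a r) := by
  intro s hs
  have := isProbabilityMeasure_gammaMeasure ha hr
  have : 0 < 1 - s / r := sub_pos.2 ((div_lt_one hr).2 hs)
  refine mgf_pos_iff.1 ?_
  rw [mgf_gammaMeasure ha hr hs]
  positivity

lemma complexMGF_gammaMeasure (ha : 0 < a) (hr : 0 < r) {z : ℂ} (hz : z.re < r) :
    complexMGF id (gammaMeasure a r) z = (1 - z / r) ^ (-a : ℂ) := by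
  have h_mgf : AnalyticOnNhd ℂ (complexMGF id (gammaMeasure a r)) {z | z.re < r} :=
    analyticOnNhd_complexMGF.mono fun z hz ↦ interior_maximal
      (Iio_subset_integrableExpSet_gammaMeasure ha hr) isOpen_Iio hz
  have h_cpow : AnalyticOnNhd ℂ (fun z : ℂ ↦ (1 - z / r) ^ (-a : ℂ)) {z | z.re < r} := by
    intro z hz
    refine AnalyticAt.cpow (by fun_prop) analyticAt_const (Or.inl ?_)
    simpa [div_ofReal_re, div_lt_one hr] using hz
  have h_real : ∀ᶠ s : ℝ in 𝓝[≠] 0,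
      complexMGF id (gammaMeasure a r) s = (1 - s / r) ^ (-a : ℂ) := by
    filter_upwards [mem_nhdsWithin_of_mem_nhds (Iio_mem_nhds hr)] with s hs
    rw [complexMGF_ofReal, mgf_gammaMeasure ha hr hs,
      ofReal_cpow (sub_nonneg.2 ((div_le_one hr).2 (le_of_lt hs)))]
    push_cast
    rfl
  exact h_mgf.eqOn_of_preconnected_of_frequently_eq h_cpow
    ((convex_Iio r).linear_preimage reLm).isPreconnected (z₀ := ((0 : ℝ) : ℂ)) (by simpa using hr)
    ((ofRealCLM.hasDerivAt.tendsto_nhdsNE (by simp)).frequently h_real.frequently) hz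

lemma charFun_gammaMeasure (ha : 0 < a) (hr : 0 < r) (t : ℝ) :
    charFun (gammaMeasure a r) t = (1 - t * I / r) ^ (-a : ℂ) := by
  rw [← complexMGF_id_mul_I, complexMGF_gammaMeasure ha hr (by simpa using hr)]

theorem map_sum_pi_gammaMeasure {ι : Type*} [Fintype ι] [Nonempty ι] {a : ι → ℝ}
    (ha : ∀ i, 0 < a i) (hr : 0 < r) :
    (Measure.pi fun i ↦ gammaMeasure (a i) r).map (fun x ↦ ∑ i, x i) =
      gammaMeasure (∑ i, a i) r := by
  have hsum : 0 < ∑ i, a i := sum_pos (fun i _ ↦ ha i) univ_nonempty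
  have := fun i ↦ isProbabilityMeasure_gammaMeasure (ha i) hr
  have := isProbabilityMeasure_gammaMeasure hsum hr
  refine Measure.ext_of_charFun (funext fun t ↦ ?_)
  have hbase : (1 - t * I / r : ℂ) ≠ 0 := fun h ↦ by simpa using congrArg re h
  simp only [charFun_map_sum_pi_eq_prod, Finset.prod_apply, charFun_gammaMeasure (ha _) hr,
    charFun_gammaMeasure hsum hr, cpow_def_of_ne_zero hbase, ← Complex.exp_sum, ← mul_sum,
    sum_neg_distrib, ofReal_sum]

end Gamma

section Gaussian

open Finset
open scoped NNReal

variable {v : ℝ≥0}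

lemma mul_gammaPDFReal_sq_eq_gaussianPDFReal (hv : v ≠ 0) {x : ℝ} (hx : 0 < x) :
    x * gammaPDFReal (1 / 2) (1 / (2 * v)) (x ^ 2) = gaussianPDFReal 0 v x := by
  have hpow : (x ^ 2) ^ ((1 : ℝ) / 2 - 1) = x⁻¹ := by
    rw [← Real.rpow_natCast, ← Real.rpow_mul hx.le, ← Real.rpow_neg_one]
    norm_num
  have hconst : (1 / (2 * v) : ℝ) ^ ((1 : ℝ) / 2) / √Real.pi = (√(2 * Real.pi * v))⁻¹ := by
    rw [← Real.sqrt_eq_rpow, ← Real.sqrt_div (by positivity), ← Real.sqrt_inv]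
    congr 1
    field_simp
  rw [gammaPDFReal, if_pos (sq_nonneg x), gaussianPDFReal, Real.Gamma_one_half_eq, hpow, hconst]
  field_simp
  simp

lemma map_sq_restrict_Ioi_gaussianReal (hv : v ≠ 0) :
    ((gaussianReal 0 v).restrict (Set.Ioi 0)).map (fun x ↦ x ^ 2) =
      (2⁻¹ : ℝ≥0) • gammaMeasure (1 / 2) (1 / (2 * v)) := by
  have hγ := measurable_gammaPDF (1 / 2) (1 / (2 * v))
  have himage : (fun x : ℝ ↦ x ^ 2) '' Set.Ioi 0 = Set.Ioi 0 := by
    refine Set.Subset.antisymm (Set.image_subset_iff.2 fun x hx ↦ ?_) fun y hy ↦ ?_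
    · exact pow_pos (Set.mem_Ioi.1 hx) 2
    · exact ⟨√y, Real.sqrt_pos.2 hy, Real.sq_sqrt (le_of_lt hy)⟩
  have hdensity : ∀ x ∈ Set.Ioi (0 : ℝ), gaussianPDF 0 v x =
      2⁻¹ * (ENNReal.ofReal (2 * x) * gammaPDF (1 / 2) (1 / (2 * v)) (x ^ 2)) := by
    intro x hx
    rw [gaussianPDF, ← mul_gammaPDFReal_sq_eq_gaussianPDFReal hv hx, gammaPDF,
      ENNReal.ofReal_mul (le_of_lt hx), ENNReal.ofReal_mul zero_le_two, ENNReal.ofReal_ofNat,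
      mul_assoc, ENNReal.inv_mul_cancel_left (by simp) (by simp)]
  refine Measure.ext_of_lintegral _ fun f hf ↦ ?_
  calc ∫⁻ y, f y ∂((gaussianReal 0 v).restrict (Set.Ioi 0)).map (fun x ↦ x ^ 2)
      = ∫⁻ x in Set.Ioi 0, gaussianPDF 0 v x * f (x ^ 2) := by
        rw [lintegral_map hf (by fun_prop), gaussianReal_of_var_ne_zero _ hv,
          setLIntegral_withDensity_eq_setLIntegral_mul _ (measurable_gaussianPDF 0 v)
            (by fun_prop) measurableSet_Ioi]
        rfl
    _ = ∫⁻ x in Set.Ioi 0, 2⁻¹ * (ENNReal.ofReal (2 * x) *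
          (gammaPDF (1 / 2) (1 / (2 * v)) (x ^ 2) * f (x ^ 2))) :=
        setLIntegral_congr_fun measurableSet_Ioi fun x hx ↦ by
          simp only [hdensity x hx, mul_assoc]
    _ = 2⁻¹ * ∫⁻ y in Set.Ioi 0, gammaPDF (1 / 2) (1 / (2 * v)) y * f y := by
        rw [lintegral_const_mul _ (by fun_prop)]
        nth_rw 2 [← himage]
        rw [lintegral_image_eq_lintegral_deriv_mul_of_monotoneOn measurableSet_Ioi
          (fun x _ ↦ by simpa using (hasDerivAt_pow 2 x).hasDerivWithinAt)
          (fun x hx y _ hxy ↦ pow_le_pow_left₀ (le_of_lt hx) hxy 2)]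
    _ = ∫⁻ y, f y ∂((2⁻¹ : ℝ≥0) • gammaMeasure (1 / 2) (1 / (2 * v))) := by
        rw [lintegral_smul_measure, ← restrict_Ioi_gammaMeasure, gammaMeasure,
          setLIntegral_withDensity_eq_setLIntegral_mul _ hγ hf measurableSet_Ioi,
          ENNReal.smul_def, ENNReal.coe_inv two_ne_zero]
        rfl

lemma gaussianReal_Iic_zero (hv : v ≠ 0) : gaussianReal 0 v (Set.Iic 0) = (2⁻¹ : ℝ≥0) := by
  have := isProbabilityMeasure_gammaMeasure (a := 1 / 2) (r := 1 / (2 * v)) (by norm_num)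
    (by positivity)
  have hIoi : gaussianReal 0 v (Set.Ioi 0) = (2⁻¹ : ℝ≥0) := by
    have := congrArg (· Set.univ) (map_sq_restrict_Ioi_gaussianReal hv)
    simpa only [Measure.map_apply (show Measurable fun x : ℝ ↦ x ^ 2 by fun_prop) .univ,
      Set.preimage_univ, Measure.restrict_apply_univ, Measure.smul_apply, measure_univ,
      ENNReal.smul_def, smul_eq_mul, mul_one] using this
  rw [← Set.compl_Ioi, prob_compl_eq_one_sub measurableSet_Ioi, hIoi, ENNReal.coe_inv two_ne_zero]
  exact ENNReal.one_sub_inv_two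

theorem map_sq_max_zero_gaussianReal (hv : v ≠ 0) :
    (gaussianReal 0 v).map (fun x ↦ max x 0 ^ 2) = (2⁻¹ : ℝ≥0) • Measure.dirac 0 +
      (2⁻¹ : ℝ≥0) • gammaMeasure (1 / 2) (1 / (2 * v)) := by
  have hIic : (fun x : ℝ ↦ max x 0 ^ 2) =ᵐ[(gaussianReal 0 v).restrict (Set.Iic 0)] fun _ ↦ 0 := by
    filter_upwards [ae_restrict_mem measurableSet_Iic] with x hx
    simp [max_eq_right (Set.mem_Iic.1 hx)]
  have hIoi : (fun x : ℝ ↦ max x 0 ^ 2) =ᵐ[(gaussianReal 0 v).restrict (Set.Ioi 0)]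
      fun x ↦ x ^ 2 := by
    filter_upwards [ae_restrict_mem measurableSet_Ioi] with x hx
    rw [max_eq_left (le_of_lt hx)]
  rw [← Measure.restrict_add_restrict_compl (μ := gaussianReal 0 v) (measurableSet_Iic (a := 0)),
    Set.compl_Iic, Measure.map_add _ _ (by fun_prop), Measure.map_congr hIic,
    Measure.map_congr hIoi, map_sq_restrict_Ioi_gaussianReal hv, Measure.map_const,
    Measure.restrict_apply_univ, gaussianReal_Iic_zero hv]
  rfl

theorem map_sum_sq_max_zero_pi_gaussianReal (hv : v ≠ 0) (N : ℕ) :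
    (Measure.pi fun _ : Fin N ↦ gaussianReal 0 v).map (fun u ↦ ∑ i, max (u i) 0 ^ 2) =
      (2⁻¹ ^ N : ℝ≥0) • (Measure.dirac 0 +
        ∑ n ∈ Icc 1 N, (N.choose n : ℝ≥0) • gammaMeasure (n / 2) (1 / (2 * v))) := by
  have hr : (0 : ℝ) < 1 / (2 * v) := by positivity
  have := isProbabilityMeasure_gammaMeasure (a := 1 / 2) one_half_pos hr
  have hweight : ∀ n ∈ range (N + 1), (2⁻¹ ^ n * 2⁻¹ ^ (N - n) * N.choose n : ℝ≥0) =
      2⁻¹ ^ N * N.choose n := fun n hn ↦ by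
    rw [← pow_add, Nat.add_sub_cancel' (mem_range_succ_iff.1 hn)]
  have hgamma : ∀ n ∈ Icc 1 N,
      (Measure.pi fun _ : Fin n ↦ gammaMeasure (1 / 2) (1 / (2 * v))).map (fun x ↦ ∑ i, x i) =
        gammaMeasure (n / 2) (1 / (2 * v)) := fun n hn ↦ by
    have : NeZero n := ⟨(Nat.one_le_iff_ne_zero.1 (mem_Icc.1 hn).1)⟩
    rw [map_sum_pi_gammaMeasure (fun _ ↦ one_half_pos) hr]
    simp [div_eq_mul_inv]
  calc (Measure.pi fun _ : Fin N ↦ gaussianReal 0 v).map (fun u ↦ ∑ i, max (u i) 0 ^ 2)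
      = (Measure.pi fun _ : Fin N ↦ (gaussianReal 0 v).map fun x ↦ max x 0 ^ 2).map
          (fun x ↦ ∑ i, x i) := by
        rw [← Measure.pi_map_pi (fun _ ↦ by fun_prop), Measure.map_map (by fun_prop) (by fun_prop)]
        rfl
    _ = ∑ n ∈ range (N + 1), (2⁻¹ ^ N * N.choose n : ℝ≥0) •
          (Measure.pi fun _ : Fin n ↦ gammaMeasure (1 / 2) (1 / (2 * v))).map
            (fun x ↦ ∑ i, x i) := by
        rw [map_sq_max_zero_gaussianReal hv, map_sum_pi_dirac_zero_mixture _ (by norm_num)]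
        exact sum_congr rfl fun n hn ↦ by rw [hweight n hn]
    _ = _ := by
        rw [sum_range_eq_add_Ico _ (by lia), Ico_add_one_right_eq_Icc, smul_add, smul_sum]
        congr 1
        · simp
        · exact sum_congr rfl fun n hn ↦ by rw [hgamma n hn, mul_smul]

lemma pi_gaussianReal_sum_sq_max_zero_le (hv : v ≠ 0) (N : ℕ) {t : ℝ} (ht : 0 ≤ t) :
    (Measure.pi fun _ : Fin N ↦ gaussianReal 0 v) {u | ∑ i, max (u i) 0 ^ 2 ≤ t} =
      2⁻¹ ^ N *
        (1 + ∑ n ∈ Icc 1 N, N.choose n * gammaMeasure (n / 2) (1 / (2 * v)) (Set.Iic t)) := by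
  have hmeas : Measurable fun u : Fin N → ℝ ↦ ∑ i, max (u i) 0 ^ 2 := by fun_prop
  calc (Measure.pi fun _ : Fin N ↦ gaussianReal 0 v) {u | ∑ i, max (u i) 0 ^ 2 ≤ t}
      = (Measure.pi fun _ : Fin N ↦ gaussianReal 0 v).map (fun u ↦ ∑ i, max (u i) 0 ^ 2)
          (Set.Iic t) := (Measure.map_apply hmeas measurableSet_Iic).symm
    _ = _ := by
        simp only [map_sum_sq_max_zero_pi_gaussianReal hv, Measure.smul_apply, Measure.add_apply,
          Measure.finsetSum_apply, Measure.dirac_apply_of_mem (Set.mem_Iic.2 ht),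
          ENNReal.smul_def, smul_eq_mul, ENNReal.coe_pow, ENNReal.coe_inv two_ne_zero,
          ENNReal.coe_ofNat, ENNReal.coe_natCast]

end Gaussian

theorem cdf_sum_sq_pos_parts_of_gaussian (N : ℕ) (hN : 1 ≤ N) (t : ℝ) (ht : 0 ≤ t) :
    (Measure.pi fun _ : Fin N => gaussianReal 0 1)
        {u : Fin N → ℝ | ∑ i, (max (u i) 0) ^ 2 ≤ t} =
      ENNReal.ofReal ((2 : ℝ) ^ (-(N : ℤ)) *
        (1 + ∑ n ∈ Finset.Icc 1 N, (N.choose n : ℝ) *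
          ((gammaMeasure ((n : ℝ) / 2) (1 / 2)) (Set.Iic t)).toReal)) := by
  have hscale : ENNReal.ofReal (2 ^ (-(N : ℤ))) = 2⁻¹ ^ N := by
    rw [zpow_neg, zpow_natCast, ENNReal.ofReal_inv_of_pos (by positivity),
      ENNReal.ofReal_pow zero_le_two, ENNReal.ofReal_ofNat, ENNReal.inv_pow]
  have hterm : ∀ n ∈ Finset.Icc 1 N,
      ENNReal.ofReal (N.choose n * (gammaMeasure ((n : ℝ) / 2) (1 / 2) (Set.Iic t)).toReal) =
        N.choose n * gammaMeasure ((n : ℝ) / 2) (1 / 2) (Set.Iic t) := by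
    intro n hn
    have := isProbabilityMeasure_gammaMeasure (a := (n : ℝ) / 2) (r := 1 / 2)
      (div_pos (Nat.cast_pos.2 (Finset.mem_Icc.1 hn).1) two_pos) one_half_pos
    rw [ENNReal.ofReal_mul (Nat.cast_nonneg _), ENNReal.ofReal_natCast,
      ENNReal.ofReal_toReal (measure_ne_top _ _)]
  rw [pi_gaussianReal_sum_sq_max_zero_le one_ne_zero N ht, ENNReal.ofReal_mul (by positivity),
    ENNReal.ofReal_add zero_le_one (by positivity), ENNReal.ofReal_one,
    ENNReal.ofReal_sum_of_nonneg fun n _ ↦ by positivity, hscale, Finset.sum_congr rfl hterm,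
    NNReal.coe_one, mul_one]
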